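/- arXiv:2310.09071 — 7 statements merged into one kernel-verified Lean document; each statement's English description precedes it below -/
import Mathlib

section
/- In the stylized fleet model, for every horizon t̄, every interval t ∈ {1,…,t̄}, every demand profile D, and every initial vehicle distribution N⁰ : R → ℝ≥0, the full-matching value equals the relaxed value: V_t(N⁰; D) = V̂_t(N⁰; D). That is, imposing the full-matching requirement (every vacant vehicle must serve a waiting customer whenever one is available at its node) does not reduce the maximum achievable number of completed requests; this is the content of Proposition 1 (zero Lagrangian duality gap of SLM in the stylized case). -/
/-!
Stylized fleet model (Proposition 1 of "Online Relocating and Matching of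
Ride-Hailing Services: A Model-Based Modular Approach").
-/

open Finset

/-- A relaxed policy in the stylized fleet model: matched flows `M`, relocation
flows `E` and induced vehicle distributions `N` over intervals `t, …, tbar`,
starting from the initial distribution `N0`. -/
def IsRelaxedPolicy (R : Type*) [Fintype R] (tbar t : ℕ) (D : ℕ → R → R → ℝ)
    (N0 : R → ℝ) (M E : ℕ → R → R → ℝ) (N : ℕ → R → ℝ) : Prop :=
  (∀ i, N t i = N0 i) ∧
  (∀ s ∈ Finset.Icc t tbar, ∀ j, N (s + 1) j = ∑ i, (M s i j + E s i j)) ∧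
  (∀ s ∈ Finset.Icc t tbar, ∀ i j, 0 ≤ M s i j) ∧
  (∀ s ∈ Finset.Icc t tbar, ∀ i j, 0 ≤ E s i j) ∧
  (∀ s ∈ Finset.Icc t tbar, ∀ i j, M s i j ≤ D s i j) ∧
  (∀ s ∈ Finset.Icc t tbar, ∀ i, ∑ j, (M s i j + E s i j) = N s i)

/-- A full-matching policy: a relaxed policy in which, at every node and
interval, every vacant vehicle serves a waiting customer whenever one is
available. -/
def IsFullMatchingPolicy (R : Type*) [Fintype R] (tbar t : ℕ) (D : ℕ → R → R → ℝ)
    (N0 : R → ℝ) (M E : ℕ → R → R → ℝ) (N : ℕ → R → ℝ) : Prop :=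
  IsRelaxedPolicy R tbar t D N0 M E N ∧
  ∀ s ∈ Finset.Icc t tbar, ∀ i, ∑ j, M s i j = min (N s i) (∑ j, D s i j)

/-- The objective of a policy: the total number of completed requests over
intervals `t, …, tbar`. -/
noncomputable def policyObj (R : Type*) [Fintype R] (tbar t : ℕ)
    (M : ℕ → R → R → ℝ) : ℝ :=
  ∑ s ∈ Finset.Icc t tbar, ∑ i, ∑ j, M s i j

/-- The relaxed value `V̂_t(N0; D)`. -/
noncomputable def relaxedValue (R : Type*) [Fintype R] (tbar t : ℕ)
    (D : ℕ → R → R → ℝ) (N0 : R → ℝ) : ℝ :=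
  sSup {v : ℝ | ∃ M E N, IsRelaxedPolicy R tbar t D N0 M E N ∧
    v = policyObj R tbar t M}

/-- The full-matching value `V_t(N0; D)`. -/
noncomputable def fullValue (R : Type*) [Fintype R] (tbar t : ℕ)
    (D : ℕ → R → R → ℝ) (N0 : R → ℝ) : ℝ :=
  sSup {v : ℝ | ∃ M E N, IsFullMatchingPolicy R tbar t D N0 M E N ∧
    v = policyObj R tbar t M}

theorem fleet_transfer_step {R : Type*} [Fintype R] (M E D : R → R → ℝ) (N N' : R → ℝ)
    (hM : ∀ i j, 0 ≤ M i j) (hE : ∀ i j, 0 ≤ E i j) (hMD : ∀ i j, M i j ≤ D i j)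
    (hrow : ∀ i, ∑ j, (M i j + E i j) = N i) (hN' : ∀ i, 0 ≤ N' i)
    (htot : ∑ i, N' i = ∑ i, N i) :
    ∃ M' E' : R → R → ℝ, (∀ i j, 0 ≤ M' i j) ∧ (∀ i j, 0 ≤ E' i j) ∧
      (∀ i j, M' i j ≤ D i j) ∧ (∀ i, ∑ j, (M' i j + E' i j) = N' i) ∧
      (∀ j, ∑ i, (M' i j + E' i j) = ∑ i, (M i j + E i j)) ∧
      ∑ i, ∑ j, M i j - ∑ i, (N i - min (N i) (N' i)) ≤ ∑ i, ∑ j, M' i j := by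
  have hN : ∀ i, 0 ≤ N i := fun i => by
    rw [← hrow i]; exact Finset.sum_nonneg fun j _ => add_nonneg (hM i j) (hE i j)
  obtain ⟨l, hl⟩ : ∃ l : R → ℝ, ∀ i, 0 ≤ l i ∧ l i ≤ 1 ∧ l i * N i = min (N i) (N' i) := by
    refine ⟨fun i => min (N i) (N' i) / N i, fun i => ⟨?_, ?_, ?_⟩⟩
    · exact div_nonneg (le_min (hN i) (hN' i)) (hN i)
    · exact div_le_one_of_le₀ (min_le_left _ _) (hN i)
    · rcases (hN i).eq_or_lt with h | h
      · have := hN' i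
        simp [← h, this]
      · exact div_mul_cancel₀ _ h.ne'
  obtain ⟨Δ, hΔ⟩ : ∃ Δ, Δ = ∑ i, (N i - min (N i) (N' i)) := ⟨_, rfl⟩
  have hΔ' : ∑ i, (N' i - min (N i) (N' i)) = Δ := by
    rw [hΔ, Finset.sum_sub_distrib, Finset.sum_sub_distrib, htot]
  obtain ⟨miss, hmiss⟩ : ∃ miss : R → ℝ, ∀ j, miss j = ∑ i, (1 - l i) * (M i j + E i j) :=
    ⟨_, fun _ => rfl⟩
  have hm0 : ∀ j, 0 ≤ miss j := fun j => by
    rw [hmiss]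
    exact Finset.sum_nonneg fun i _ =>
      mul_nonneg (by linarith [(hl i).2.1]) (add_nonneg (hM i j) (hE i j))
  have hms : ∑ j, miss j = Δ := by
    simp only [hmiss]
    rw [Finset.sum_comm, hΔ]
    refine Finset.sum_congr rfl fun i _ => ?_
    rw [← Finset.mul_sum, hrow]
    linarith [(hl i).2.2]
  have hs0 : ∀ i, 0 ≤ N' i - min (N i) (N' i) := fun i => by linarith [min_le_right (N i) (N' i)]
  have hd0 : 0 ≤ Δ := hms ▸ Finset.sum_nonneg fun j _ => hm0 j
  have hz : Δ = 0 → (∀ j, miss j = 0) ∧ ∀ i, N' i - min (N i) (N' i) = 0 := by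
    intro h
    constructor
    · intro j
      exact (Finset.sum_eq_zero_iff_of_nonneg fun j _ => hm0 j).1 (hms.trans h) j (Finset.mem_univ _)
    · intro j
      exact (Finset.sum_eq_zero_iff_of_nonneg fun j _ => hs0 j).1 (hΔ'.trans h) j (Finset.mem_univ _)
  refine ⟨fun i j => l i * M i j,
    fun i j => l i * E i j + (N' i - min (N i) (N' i)) * (miss j / Δ), ?_, ?_, ?_, ?_, ?_, ?_⟩
  · exact fun i j => mul_nonneg (hl i).1 (hM i j)
  · exact fun i j => add_nonneg (mul_nonneg (hl i).1 (hE i j))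
      (mul_nonneg (hs0 i) (div_nonneg (hm0 j) hd0))
  · exact fun i j => (mul_le_of_le_one_left (hM i j) (hl i).2.1).trans (hMD i j)
  · intro i
    have h1 : ∑ j, (l i * M i j + (l i * E i j + (N' i - min (N i) (N' i)) * (miss j / Δ)))
        = l i * ∑ j, (M i j + E i j) + (N' i - min (N i) (N' i)) * ((∑ j, miss j) / Δ) := by
      rw [Finset.sum_div, Finset.mul_sum, Finset.mul_sum, ← Finset.sum_add_distrib]
      exact Finset.sum_congr rfl fun j _ => by ring
    rw [h1, hrow, (hl i).2.2, hms]
    by_cases h : Δ = 0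
    · have := (hz h).2 i
      rw [this]; linarith
    · rw [div_self h]; ring
  · intro j
    have h1 : ∑ i, (l i * M i j + (l i * E i j + (N' i - min (N i) (N' i)) * (miss j / Δ)))
        = ∑ i, (M i j + E i j) - miss j + (∑ i, (N' i - min (N i) (N' i))) * (miss j / Δ) := by
      rw [hmiss, Finset.sum_mul, ← Finset.sum_sub_distrib, ← Finset.sum_add_distrib]
      exact Finset.sum_congr rfl fun j _ => by ring
    rw [h1, hΔ']
    by_cases h : Δ = 0
    · simp [(hz h).1 j]
    · rw [mul_div_cancel₀ _ h]; ring
  · rw [← Finset.sum_sub_distrib]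
    refine Finset.sum_le_sum fun i _ => ?_
    rw [← Finset.mul_sum]
    have h1 : ∑ j, M i j ≤ N i := by
      rw [← hrow i]
      exact Finset.sum_le_sum fun j _ => by linarith [hE i j]
    nlinarith [hl i]

theorem fleet_row {R : Type*} [Fintype R] (m e d : R → ℝ)
    (he : ∀ j, 0 ≤ e j) (hmd : ∀ j, m j ≤ d j) :
    ∃ m' e' : R → ℝ, (∀ j, m j ≤ m' j) ∧ (∀ j, m' j ≤ d j) ∧ (∀ j, 0 ≤ e' j) ∧
      (∀ j, e' j ≤ e j) ∧ (∑ j, (m' j + e' j) = ∑ j, (m j + e j)) ∧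
      ∑ j, m' j = min (∑ j, (m j + e j)) (∑ j, d j) := by
  have key : ∀ f : R → ℝ, (∀ j, 0 ≤ f j) → ∀ δ, 0 ≤ δ → δ ≤ ∑ j, f j →
      ∃ a : ℝ, 0 ≤ a ∧ a ≤ 1 ∧ a * ∑ j, f j = δ := by
    intro f hf δ h0 h1
    have hs : 0 ≤ ∑ j, f j := Finset.sum_nonneg fun j _ => hf j
    refine ⟨δ / ∑ j, f j, div_nonneg h0 hs, div_le_one_of_le₀ h1 hs, ?_⟩
    rcases hs.eq_or_lt with h | h
    · rw [← h]; linarith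
    · exact div_mul_cancel₀ _ h.ne'
  have hf : ∀ j, 0 ≤ d j - m j := fun j => by linarith [hmd j]
  have hδ : 0 ≤ min (∑ j, e j) (∑ j, (d j - m j)) :=
    le_min (Finset.sum_nonneg fun j _ => he j) (Finset.sum_nonneg fun j _ => hf j)
  obtain ⟨b, hb0, hb1, hb⟩ := key e he _ hδ (min_le_left _ _)
  obtain ⟨a, ha0, ha1, ha⟩ := key _ hf _ hδ (min_le_right _ _)
  have hsm : ∑ j, (m j + a * (d j - m j)) = ∑ j, m j + min (∑ j, e j) (∑ j, (d j - m j)) := by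
    rw [Finset.sum_add_distrib, ← Finset.mul_sum, ha]
  have hse : ∑ j, (e j - b * e j) = ∑ j, e j - min (∑ j, e j) (∑ j, (d j - m j)) := by
    rw [Finset.sum_sub_distrib, ← Finset.mul_sum, hb]
  refine ⟨fun j => m j + a * (d j - m j), fun j => e j - b * e j, ?_, ?_, ?_, ?_, ?_, ?_⟩
  · intro j; nlinarith [hf j]
  · intro j; nlinarith [hf j]
  · intro j; nlinarith [he j]
  · intro j; nlinarith [he j]
  · rw [Finset.sum_add_distrib, hsm, hse, Finset.sum_add_distrib]; ring
  · rw [hsm, Finset.sum_add_distrib, Finset.sum_sub_distrib, ← min_add_add_left]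
    congr 1; ring

theorem fleet_obj_step {R : Type*} [Fintype R] {tbar t : ℕ} (h : t ≤ tbar)
    (M : ℕ → R → R → ℝ) :
    policyObj R tbar t M = ∑ i, ∑ j, M t i j + policyObj R tbar (t + 1) M := by
  unfold policyObj
  rw [← Finset.insert_Icc_add_one_left_eq_Icc h, Finset.sum_insert (by simp)]

theorem fleet_tail {R : Type*} [Fintype R] {tbar t : ℕ} {D : ℕ → R → R → ℝ} {N0 : R → ℝ}
    {M E : ℕ → R → R → ℝ} {N : ℕ → R → ℝ} (h : IsRelaxedPolicy R tbar t D N0 M E N) :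
    IsRelaxedPolicy R tbar (t + 1) D (N (t + 1)) M E N := by
  obtain ⟨h1, h2, h3, h4, h5, h6⟩ := h
  have hs : ∀ s ∈ Finset.Icc (t + 1) tbar, s ∈ Finset.Icc t tbar := fun s hs => by
    simp only [Finset.mem_Icc] at *; omega
  exact ⟨fun _ => rfl, fun s h => h2 s (hs s h), fun s h => h3 s (hs s h),
    fun s h => h4 s (hs s h), fun s h => h5 s (hs s h), fun s h => h6 s (hs s h)⟩

theorem fleet_glue {R : Type*} [Fintype R] {tbar t : ℕ} {D : ℕ → R → R → ℝ} {N0 N1 : R → ℝ}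
    {M E : ℕ → R → R → ℝ} {N : ℕ → R → ℝ} (ht : t ≤ tbar)
    (h : IsRelaxedPolicy R tbar (t + 1) D N1 M E N)
    (m e : R → R → ℝ) (hm : ∀ i j, 0 ≤ m i j) (he : ∀ i j, 0 ≤ e i j)
    (hmd : ∀ i j, m i j ≤ D t i j) (hrow : ∀ i, ∑ j, (m i j + e i j) = N0 i)
    (hcol : ∀ j, N1 j = ∑ i, (m i j + e i j)) :
    ∃ M' E' N', IsRelaxedPolicy R tbar t D N0 M' E' N' ∧
      policyObj R tbar t M' = ∑ i, ∑ j, m i j + policyObj R tbar (t + 1) M ∧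
      M' t = m ∧ N' t = N0 ∧ ∀ s, s ≠ t → M' s = M s ∧ N' s = N s := by
  obtain ⟨h1, h2, h3, h4, h5, h6⟩ := h
  have hs : ∀ s ∈ Finset.Icc t tbar, s ≠ t → s ∈ Finset.Icc (t + 1) tbar := fun s hs hne => by
    simp only [Finset.mem_Icc] at *; omega
  refine ⟨fun s => if s = t then m else M s, fun s => if s = t then e else E s,
    fun s => if s = t then N0 else N s, ⟨?_, ?_, ?_, ?_, ?_, ?_⟩, ?_, by simp, by simp, ?_⟩
  · simp
  · intro s hh j
    by_cases hst : s = t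
    · subst hst; simp [h1, hcol]
    · have h7 : s + 1 ≠ t := by simp only [Finset.mem_Icc] at hh; omega
      simp only [hst, h7, if_false]; exact h2 s (hs s hh hst) j
  · intro s hh i j
    by_cases hst : s = t
    · simp [hst, hm]
    · simp only [hst, if_false]; exact h3 s (hs s hh hst) i j
  · intro s hh i j
    by_cases hst : s = t
    · simp [hst, he]
    · simp only [hst, if_false]; exact h4 s (hs s hh hst) i j
  · intro s hh i j
    by_cases hst : s = t
    · simp [hst, hmd]
    · simp only [hst, if_false]; exact h5 s (hs s hh hst) i j
  · intro s hh i
    by_cases hst : s = t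
    · simp [hst, hrow]
    · simp only [hst, if_false]; exact h6 s (hs s hh hst) i
  · rw [fleet_obj_step ht]
    congr 1
    · simp
    · unfold policyObj
      refine Finset.sum_congr rfl fun s hh => ?_
      have h7 : s ≠ t := by simp only [Finset.mem_Icc] at hh; omega
      simp [h7]
  · intro s hne; simp [hne]

theorem fleet_trivial {R : Type*} [Fintype R] {tbar t : ℕ} (ht : tbar < t)
    (D : ℕ → R → R → ℝ) (N0 : R → ℝ) (M : ℕ → R → R → ℝ) :
    IsFullMatchingPolicy R tbar t D N0 M M (fun _ => N0) ∧ policyObj R tbar t M = 0 := by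
  have : Finset.Icc t tbar = ∅ := Finset.Icc_eq_empty (by omega)
  simp [IsFullMatchingPolicy, IsRelaxedPolicy, policyObj, this]

theorem fleet_transfer {R : Type*} [Fintype R] {tbar t : ℕ} {D : ℕ → R → R → ℝ} {N0 : R → ℝ}
    {M E : ℕ → R → R → ℝ} {N : ℕ → R → ℝ} (h : IsRelaxedPolicy R tbar t D N0 M E N)
    (N0' : R → ℝ) (hN' : ∀ i, 0 ≤ N0' i) (htot : ∑ i, N0' i = ∑ i, N0 i) :
    ∃ M' E' N', IsRelaxedPolicy R tbar t D N0' M' E' N' ∧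
      policyObj R tbar t M - ∑ i, (N0 i - min (N0 i) (N0' i)) ≤ policyObj R tbar t M' := by
  by_cases ht : t ≤ tbar
  · have hh := h
    obtain ⟨h1, h2, h3, h4, h5, h6⟩ := h
    have hm : t ∈ Finset.Icc t tbar := by simp [ht]
    obtain ⟨m, e, a1, a2, a3, a4, a5, a6⟩ := fleet_transfer_step (M t) (E t) (D t) N0 N0'
      (h3 t hm) (h4 t hm) (h5 t hm) (fun i => (h6 t hm i).trans (h1 i)) hN' htot
    obtain ⟨M', E', N', b1, b2, -⟩ := fleet_glue ht (fleet_tail hh) m e a1 a2 a3 a4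
      (fun j => (h2 t hm j).trans (a5 j).symm)
    refine ⟨M', E', N', b1, ?_⟩
    rw [b2, fleet_obj_step ht]; linarith
  · have ht : tbar < t := by omega
    refine ⟨M, M, _, (fleet_trivial ht D N0' M).1.1, ?_⟩
    have : 0 ≤ ∑ i, (N0 i - min (N0 i) (N0' i)) :=
      Finset.sum_nonneg fun i _ => by linarith [min_le_left (N0 i) (N0' i)]
    linarith

theorem fleet_main {R : Type*} [Fintype R] (tbar : ℕ) (D : ℕ → R → R → ℝ) (n : ℕ) :
    ∀ (t : ℕ) (N0 : R → ℝ) (M E : ℕ → R → R → ℝ) (N : ℕ → R → ℝ), tbar + 1 - t = n →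
      IsRelaxedPolicy R tbar t D N0 M E N →
      ∃ M' E' N', IsFullMatchingPolicy R tbar t D N0 M' E' N' ∧
        policyObj R tbar t M ≤ policyObj R tbar t M' := by
  induction n with
  | zero =>
    intro t N0 M E N hn h
    have ht : tbar < t := by omega
    exact ⟨M, M, _, (fleet_trivial ht D N0 M).1, le_rfl⟩
  | succ n ih =>
    intro t N0 M E N hn h
    have ht : t ≤ tbar := by omega
    have hh := h
    obtain ⟨h1, h2, h3, h4, h5, h6⟩ := h
    have hm : t ∈ Finset.Icc t tbar := by simp [ht]
    choose m e a1 a2 a3 a4 a5 a6 using fun i => fleet_row (M t i) (E t i) (D t i)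
      (h4 t hm i) (h5 t hm i)
    have hm0 : ∀ i j, 0 ≤ m i j := fun i j => (h3 t hm i j).trans (a1 i j)
    have hrow : ∀ i, ∑ j, (M t i j + E t i j) = N0 i := fun i => (h6 t hm i).trans (h1 i)
    obtain ⟨N1, hN1⟩ : ∃ N1 : R → ℝ, ∀ j, N1 j = ∑ i, (m i j + e i j) := ⟨_, fun _ => rfl⟩
    have hN1' : ∀ j, 0 ≤ N1 j := fun j => by
      rw [hN1]; exact Finset.sum_nonneg fun i _ => add_nonneg (hm0 i j) (a3 i j)
    have htot : ∑ j, N1 j = ∑ j, N (t + 1) j := by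
      simp only [hN1, h2 t hm]
      rw [Finset.sum_comm, Finset.sum_comm (f := fun j i => M t i j + E t i j)]
      exact Finset.sum_congr rfl fun i _ => a5 i
    obtain ⟨M1, E1, N1s, b1, b2⟩ := fleet_transfer (fleet_tail hh) N1 hN1' htot
    obtain ⟨M2, E2, N2, c1, c2⟩ := ih (t + 1) N1 M1 E1 N1s (by omega) b1
    obtain ⟨M3, E3, N3, d1, d2, d3, d4, d5⟩ := fleet_glue ht c1.1 m e hm0 a3 a2
      (fun i => (a5 i).trans (hrow i)) hN1
    refine ⟨M3, E3, N3, ⟨d1, ?_⟩, ?_⟩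
    · intro s hs i
      by_cases hst : s = t
      · subst hst; rw [d3, d4, a6, hrow]
      · rw [(d5 s hst).1, (d5 s hst).2]
        exact c1.2 s (by simp only [Finset.mem_Icc] at *; omega) i
    · rw [d2, fleet_obj_step ht]
      have hdef : ∑ j, (N (t + 1) j - min (N (t + 1) j) (N1 j))
          ≤ ∑ i, ∑ j, m i j - ∑ i, ∑ j, M t i j := by
        have e1 : ∑ i, ∑ j, m i j - ∑ i, ∑ j, M t i j = ∑ j, ∑ i, (E t i j - e i j) := by
          rw [Finset.sum_comm (f := fun j i => E t i j - e i j), ← Finset.sum_sub_distrib]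
          refine Finset.sum_congr rfl fun i _ => ?_
          have := a5 i
          rw [Finset.sum_add_distrib, Finset.sum_add_distrib] at this
          rw [Finset.sum_sub_distrib]; linarith
        rw [e1]
        refine Finset.sum_le_sum fun j _ => ?_
        have e2 : 0 ≤ ∑ i, (E t i j - e i j) :=
          Finset.sum_nonneg fun i _ => by linarith [a4 i j]
        have e3 : N (t + 1) j - N1 j ≤ ∑ i, (E t i j - e i j) := by
          rw [h2 t hm, hN1, ← Finset.sum_sub_distrib]
          exact Finset.sum_le_sum fun i _ => by linarith [a1 i j]
        rcases min_choice (N (t + 1) j) (N1 j) with h | h <;> rw [h] <;> linarith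
      linarith

theorem fullValue_eq_relaxedValue (R : Type*) [Fintype R] [Nonempty R]
    (tbar t : ℕ) (ht : t ∈ Finset.Icc 1 tbar)
    (D : ℕ → R → R → ℝ) (hD : ∀ s i j, 0 ≤ D s i j)
    (N0 : R → ℝ) (hN0 : ∀ i, 0 ≤ N0 i) :
    fullValue R tbar t D N0 = relaxedValue R tbar t D N0 := by
  classical
  have hrel : IsRelaxedPolicy R tbar t D N0 (fun _ _ _ => 0)
      (fun _ i j => if i = j then N0 i else 0) (fun _ => N0) := by
    refine ⟨fun _ => rfl, ?_, ?_, ?_, ?_, ?_⟩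
    · intro s _ j; simp
    · intro s _ i j; simp
    · intro s _ i j
      show 0 ≤ if i = j then N0 i else 0
      split_ifs
      · exact hN0 i
      · exact le_rfl
    · intro s _ i j; exact hD s i j
    · intro s _ i; simp
  have hbdd : BddAbove {v : ℝ | ∃ M E N, IsRelaxedPolicy R tbar t D N0 M E N ∧
      v = policyObj R tbar t M} := by
    refine ⟨policyObj R tbar t D, ?_⟩
    rintro v ⟨M, E, N, h, rfl⟩
    exact Finset.sum_le_sum fun s hs => Finset.sum_le_sum fun i _ =>
      Finset.sum_le_sum fun j _ => h.2.2.2.2.1 s hs i j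
  have hsub : {v : ℝ | ∃ M E N, IsFullMatchingPolicy R tbar t D N0 M E N ∧
      v = policyObj R tbar t M} ⊆ {v : ℝ | ∃ M E N, IsRelaxedPolicy R tbar t D N0 M E N ∧
      v = policyObj R tbar t M} := by
    rintro v ⟨M, E, N, h, rfl⟩
    exact ⟨M, E, N, h.1, rfl⟩
  unfold fullValue relaxedValue
  apply le_antisymm
  · refine csSup_le_csSup hbdd ?_ hsub
    obtain ⟨M, E, N, h, -⟩ := fleet_main tbar D _ t N0 _ _ _ rfl hrel
    exact ⟨_, M, E, N, h, rfl⟩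
  · refine csSup_le ⟨_, _, _, _, hrel, rfl⟩ ?_
    rintro v ⟨M, E, N, h, rfl⟩
    obtain ⟨M', E', N', h', hle⟩ := fleet_main tbar D _ t N0 _ _ _ rfl h
    exact le_csSup_of_le (hbdd.mono hsub) ⟨M', E', N', h', rfl⟩ hle
end

section
/- (Lemma B.1.) In the stylized fleet model, the relaxed value is 1/2-Lipschitz in the initial distribution with respect to the ℓ¹ norm, among distributions with equal total fleet size: for every horizon t̄, interval t ∈ {1,…,t̄}, demand profile D, and initial distributions N, Ñ : R → ℝ≥0 with ∑_{i∈R} N(i) = ∑_{i∈R} Ñ(i), one has |V̂_t(N; D) − V̂_t(Ñ; D)| ≤ (1/2) ∑_{i∈R} |N(i) − Ñ(i)|. -/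
/-! Stylized fleet model of "Online Relocating and Matching of Ride-Hailing
Services: A Model-Based Modular Approach". -/

open Finset

theorem relaxed_transfer (R : Type*) [Fintype R]
    (tbar t : ℕ) (ht : t ≤ tbar)
    (D : ℕ → R → R → ℝ)
    (N0 N0' : R → ℝ) (hN0 : ∀ i, 0 ≤ N0 i) (hN0' : ∀ i, 0 ≤ N0' i)
    (htot : ∑ i, N0 i = ∑ i, N0' i) (M E : ℕ → R → R → ℝ) (N : ℕ → R → ℝ)
    (h : IsRelaxedPolicy R tbar t D N0 M E N) :
    ∃ M' E' N', IsRelaxedPolicy R tbar t D N0' M' E' N' ∧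
      policyObj R tbar t M ≤ policyObj R tbar t M' + (1 / 2) * ∑ i, |N0 i - N0' i| := by
  obtain ⟨h1, h2, h3, h4, h5, h6⟩ := h
  have htm : t ∈ Finset.Icc t tbar := Finset.mem_Icc.2 ⟨le_rfl, ht⟩
  set m : R → ℝ := fun i => min (N0 i) (N0' i) with hm
  have hm0 : ∀ i, 0 ≤ m i := fun i => le_min (hN0 i) (hN0' i)
  have hmN : ∀ i, m i ≤ N0 i := fun i => min_le_left _ _
  have hmN' : ∀ i, m i ≤ N0' i := fun i => min_le_right _ _
  set r : R → ℝ := fun i => m i / N0 i with hr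
  have hr0 : ∀ i, 0 ≤ r i := fun i => div_nonneg (hm0 i) (hN0 i)
  have hr1 : ∀ i, r i ≤ 1 := fun i => div_le_one_of_le₀ (hmN i) (hN0 i)
  have hrm : ∀ i, r i * N0 i = m i := by
    intro i
    by_cases h0 : N0 i = 0
    · have := hmN i
      have := hm0 i
      rw [h0, mul_zero]; linarith
    · exact div_mul_cancel₀ _ h0
  set K : ℝ := ∑ i, (N0' i - m i) with hK
  have hK2 : ∑ i, (N0 i - m i) = K := by
    simp only [hK, Finset.sum_sub_distrib, htot]
  have habs : (1 / 2) * ∑ i, |N0 i - N0' i| = K := by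
    have : ∑ i, |N0 i - N0' i| = ∑ i, (N0 i - m i) + ∑ i, (N0' i - m i) := by
      rw [← Finset.sum_add_distrib]
      refine Finset.sum_congr rfl fun i _ => ?_
      simp only [hm]
      rcases le_total (N0 i) (N0' i) with hl | hl
      · rw [min_eq_left hl, abs_of_nonpos (by linarith)]; ring
      · rw [min_eq_right hl, abs_of_nonneg (by linarith)]; ring
    rw [this, hK2]; ring
  have hrow : ∀ i, ∑ j, (M t i j + E t i j) = N0 i := fun i => by rw [h6 t htm i, h1]
  have hF0 : ∀ i j, 0 ≤ M t i j + E t i j := fun i j => add_nonneg (h3 t htm i j) (h4 t htm i j)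
  set δ : R → ℝ := fun j => ∑ i, (1 - r i) * (M t i j + E t i j) with hδ
  have hδ0 : ∀ j, 0 ≤ δ j := fun j =>
    Finset.sum_nonneg fun i _ => mul_nonneg (by linarith [hr1 i]) (hF0 i j)
  have hδK : ∑ j, δ j = K := by
    simp only [hδ]
    rw [Finset.sum_comm, ← hK2]
    refine Finset.sum_congr rfl fun i _ => ?_
    rw [← Finset.mul_sum, hrow, sub_mul, hrm, one_mul]
  have hK0 : 0 ≤ K := by rw [← hδK]; exact Finset.sum_nonneg fun j _ => hδ0 j
  have hKδ : ∀ j, K * (δ j / K) = δ j := by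
    intro j
    by_cases h0 : K = 0
    · have := (Finset.sum_eq_zero_iff_of_nonneg (fun j _ => hδ0 j)).1 (hδK.trans h0) j
        (Finset.mem_univ j)
      rw [this, h0]; simp
    · exact mul_div_cancel₀ _ h0
  have hKe : ∀ i, (N0' i - m i) * (K / K) = N0' i - m i := by
    intro i
    by_cases h0 : K = 0
    · have := (Finset.sum_eq_zero_iff_of_nonneg
        (fun i _ => sub_nonneg.2 (hmN' i))).1 h0 i (Finset.mem_univ i)
      rw [this]; simp
    · rw [div_self h0, mul_one]
  refine ⟨fun s i j => if s = t then r i * M t i j else M s i j,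
    fun s i j => if s = t then r i * E t i j + (N0' i - m i) * (δ j / K) else E s i j,
    fun s i => if s = t then N0' i else N s i, ⟨?_, ?_, ?_, ?_, ?_, ?_⟩, ?_⟩
  · simp
  · intro s hs j
    have hst : s + 1 ≠ t := by have := (Finset.mem_Icc.1 hs).1; omega
    by_cases hs' : s = t
    · subst hs'
      simp only [if_true, if_neg hst]
      rw [h2 s hs j]
      symm
      have e : ∀ i, r i * M s i j + (r i * E s i j + (N0' i - m i) * (δ j / K))
        = (M s i j + E s i j) - (1 - r i) * (M s i j + E s i j) + (N0' i - m i) * (δ j / K) := by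
        intro i; ring
      rw [Finset.sum_congr rfl fun i _ => e i, Finset.sum_add_distrib, Finset.sum_sub_distrib,
        ← Finset.sum_mul, ← hK, hKδ]
      simp only [hδ]; ring
    · simp only [if_neg hst, if_neg hs']
      exact h2 s hs j
  · intro s hs i j
    dsimp only
    split_ifs
    · exact mul_nonneg (hr0 i) (h3 t htm i j)
    · exact h3 s hs i j
  · intro s hs i j
    dsimp only
    split_ifs
    · exact add_nonneg (mul_nonneg (hr0 i) (h4 t htm i j))
        (mul_nonneg (sub_nonneg.2 (hmN' i)) (div_nonneg (hδ0 j) hK0))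
    · exact h4 s hs i j
  · intro s hs i j
    dsimp only
    split_ifs with hs'
    · subst hs'
      exact (mul_le_of_le_one_left (h3 s hs i j) (hr1 i)).trans (h5 s hs i j)
    · exact h5 s hs i j
  · intro s hs i
    by_cases hs' : s = t
    · subst hs'
      simp only [if_true]
      have e : ∀ j, r i * M s i j + (r i * E s i j + (N0' i - m i) * (δ j / K))
        = r i * (M s i j + E s i j) + (N0' i - m i) * (δ j / K) := by
        intro i; ring
      rw [Finset.sum_congr rfl fun i _ => e i, Finset.sum_add_distrib, ← Finset.mul_sum,
        ← Finset.mul_sum, ← Finset.sum_div, hδK, hrow, hrm, hKe]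
      ring
    · simp only [if_neg hs']
      exact h6 s hs i
  · rw [habs]
    unfold policyObj
    rw [← Finset.add_sum_erase _ _ htm, ← Finset.add_sum_erase _ _ htm]
    have e : ∑ s ∈ (Finset.Icc t tbar).erase t, ∑ i, ∑ j,
        (if s = t then r i * M t i j else M s i j) =
        ∑ s ∈ (Finset.Icc t tbar).erase t, ∑ i, ∑ j, M s i j := by
      refine Finset.sum_congr rfl fun s hs => ?_
      simp only [if_neg (Finset.ne_of_mem_erase hs)]
    rw [e]
    simp only [if_true]
    have : ∑ i, ∑ j, M t i j ≤ ∑ i, ∑ j, r i * M t i j + K := by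
      rw [← hK2, ← Finset.sum_add_distrib]
      refine Finset.sum_le_sum fun i _ => ?_
      rw [← Finset.mul_sum]
      have a : ∑ j, M t i j ≤ N0 i := by
        rw [← hrow i]
        exact Finset.sum_le_sum fun j _ => by linarith [h4 t htm i j]
      have b := mul_le_mul_of_nonneg_left a (sub_nonneg.2 (hr1 i))
      rw [sub_mul, sub_mul, hrm] at b
      linarith
    linarith

theorem relaxed_one_side (R : Type*) [Fintype R]
    (tbar t : ℕ) (ht : t ≤ tbar)
    (D : ℕ → R → R → ℝ) (hD : ∀ s i j, 0 ≤ D s i j)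
    (N0 N0' : R → ℝ) (hN0 : ∀ i, 0 ≤ N0 i) (hN0' : ∀ i, 0 ≤ N0' i)
    (htot : ∑ i, N0 i = ∑ i, N0' i) :
    relaxedValue R tbar t D N0 ≤ relaxedValue R tbar t D N0' +
      (1 / 2) * ∑ i, |N0 i - N0' i| := by
  classical
  unfold relaxedValue
  apply csSup_le
  · refine ⟨_, fun _ _ _ => 0, fun _ i j => if i = j then N0 i else 0, fun _ => N0,
      ⟨?_, ?_, ?_, ?_, ?_, ?_⟩, rfl⟩
    · simp
    · simp
    · simp
    · intro s _ i j
      dsimp only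
      split_ifs
      · exact hN0 i
      · exact le_rfl
    · intro s _ i j
      exact hD s i j
    · simp
  · rintro v ⟨M, E, N, h, rfl⟩
    obtain ⟨M', E', N', h', hle⟩ :=
      relaxed_transfer R tbar t ht D N0 N0' hN0 hN0' htot M E N h
    suffices hs : policyObj R tbar t M' ≤ sSup {v : ℝ | ∃ M E N,
        IsRelaxedPolicy R tbar t D N0' M E N ∧ v = policyObj R tbar t M} by linarith
    refine le_csSup ?_ ⟨M', E', N', h', rfl⟩
    refine ⟨policyObj R tbar t D, ?_⟩
    rintro v ⟨M, E, N, h, rfl⟩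
    exact Finset.sum_le_sum fun s hs => Finset.sum_le_sum fun i _ =>
      Finset.sum_le_sum fun j _ => h.2.2.2.2.1 s hs i j

/-- **Lemma B.1**: the relaxed value is `1/2`-Lipschitz in the initial
distribution with respect to the `ℓ¹` norm, among nonnegative initial
distributions with equal total fleet size. -/
theorem relaxedValue_lipschitz (R : Type*) [Fintype R] [Nonempty R]
    (tbar t : ℕ) (ht : t ∈ Finset.Icc 1 tbar)
    (D : ℕ → R → R → ℝ) (hD : ∀ s i j, 0 ≤ D s i j)
    (N0 N0' : R → ℝ) (hN0 : ∀ i, 0 ≤ N0 i) (hN0' : ∀ i, 0 ≤ N0' i)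
    (htot : ∑ i, N0 i = ∑ i, N0' i) :
    |relaxedValue R tbar t D N0 - relaxedValue R tbar t D N0'| ≤
      (1 / 2) * ∑ i, |N0 i - N0' i| := by
  have h := (Finset.mem_Icc.1 ht).2
  have a := relaxed_one_side R tbar t h D hD N0 N0' hN0 hN0' htot
  have b := relaxed_one_side R tbar t h D hD N0' N0 hN0' hN0 htot.symm
  simp only [abs_sub_comm (N0' _) (N0 _)] at b
  rw [abs_le]
  constructor <;> linarith
end

section
/- In the stylized fleet model, the relaxed value is monotone in the initial vehicle distribution: for every horizon t̄, interval t ∈ {1,…,t̄}, demand profile D, and initial distributions N, Ñ : R → ℝ≥0 with N(i) ≤ Ñ(i) for all i ∈ R, one has V̂_t(N; D) ≤ V̂_t(Ñ; D). (Extra vehicles can replicate the relocation destinations of a given policy without serving customers, so additional supply never decreases the optimal number of completed requests.) -/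
/-! Stylized fleet model of "Online Relocating and Matching of Ride-Hailing
Services: A Model-Based Modular Approach". -/

open Finset

/-- The relaxed value is monotone in the initial vehicle distribution:
additional supply never decreases the optimal number of completed requests. -/
theorem relaxedValue_mono (R : Type*) [Fintype R] [Nonempty R]
    (tbar t : ℕ) (ht : t ∈ Finset.Icc 1 tbar)
    (D : ℕ → R → R → ℝ) (hD : ∀ s i j, 0 ≤ D s i j)
    (N0 N0' : R → ℝ) (hN0 : ∀ i, 0 ≤ N0 i)
    (hle : ∀ i, N0 i ≤ N0' i) :
    relaxedValue R tbar t D N0 ≤ relaxedValue R tbar t D N0' := by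
  classical
  unfold relaxedValue
  apply csSup_le_csSup
  · refine ⟨∑ s ∈ Finset.Icc t tbar, ∑ i, ∑ j, D s i j, ?_⟩
    rintro v ⟨M, E, N, ⟨_, _, _, _, h5, _⟩, rfl⟩
    exact Finset.sum_le_sum fun s hs => Finset.sum_le_sum fun i _ =>
      Finset.sum_le_sum fun j _ => h5 s hs i j
  · refine ⟨_, fun _ _ _ => 0, fun _ i j => if i = j then N0 i else 0, fun _ => N0,
      ⟨fun i => rfl, ?_, ?_, ?_, ?_, ?_⟩, rfl⟩
    · intro s _ j
      simp
    · intro s _ i j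
      exact le_rfl
    · intro s _ i j
      dsimp only
      split_ifs
      · exact hN0 i
      · exact le_rfl
    · intro s _ i j
      exact hD s i j
    · intro s _ i
      simp
  · rintro v ⟨M, E, N, ⟨h1, h2, h3, h4, h5, h6⟩, rfl⟩
    refine ⟨M, fun s i j => E s i j + if i = j then N0' i - N0 i else 0,
      fun s i => N s i + (N0' i - N0 i), ⟨?_, ?_, h3, ?_, h5, ?_⟩, rfl⟩
    · intro i
      simp [h1 i]
    · intro s hs j
      simp only [h2 s hs j, ← add_assoc]
      rw [Finset.sum_add_distrib (g := fun i => if i = j then N0' i - N0 i else 0)]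
      simp
    · intro s hs i j
      have := h4 s hs i j
      have := hle i
      dsimp only
      split_ifs <;> linarith
    · intro s hs i
      simp only [← h6 s hs i, ← add_assoc]
      rw [Finset.sum_add_distrib (g := fun j => if i = j then N0' i - N0 i else 0)]
      simp
end

section
/- (Proposition 2, Case 1: optimality of the fractional-part greedy allocation.) Write x⁰_j = min(⌊q_j⌋, c_j), S = {j ∈ R : c_j > ⌊q_j⌋}, m = n − ∑_{j∈R} x⁰_j (a nonnegative integer), and θ_j = q_j − ⌊q_j⌋. Suppose |S| > m, and let T ⊆ S with |T| = m be such that θ_i ≥ θ_j for every i ∈ T and j ∈ S∖T. Then x* defined by x*_j = x⁰_j + 1 for j ∈ T and x*_j = x⁰_j otherwise is a vehicle allocation, and for every vehicle allocation x, ∑_{j∈R} max(0, q_j − x_j) ≥ ∑_{j∈R} max(0, q_j − x*_j); i.e., x* minimizes the reduced MVA objective. -/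
open Finset

/-- **Proposition 2, Case 1** (optimality of the fractional-part greedy
allocation in the MVA problem): when the number `m` of leftover vehicles after
the floor pre-assignment `x⁰` is smaller than the number of zones with residual
demand, adding one vehicle to the `m` such zones with largest fractional parts
`θ j = q j − ⌊q j⌋` yields a vehicle allocation minimizing the reduced MVA
objective `∑ j, max 0 (q j − x j)`. -/
theorem mva_case1_greedy_optimal (R : Type*) [Fintype R] [DecidableEq R] [Nonempty R]
    (n : ℕ) (hn : 1 ≤ n) (c : R → ℕ) (hc : n ≤ ∑ j, c j)
    (d : R → ℝ) (hd : ∀ j, 0 ≤ d j) (hd0 : ∃ j, d j ≠ 0)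
    (q : R → ℝ) (hq : ∀ j, q j = (n : ℝ) * d j / ∑ i, d i)
    (x0 : R → ℕ) (hx0 : ∀ j, x0 j = min ⌊q j⌋₊ (c j))
    (S : Finset R) (hS : S = Finset.univ.filter fun j => ⌊q j⌋₊ < c j)
    (m : ℕ) (hm : m = n - ∑ j, x0 j)
    (θ : R → ℝ) (hθ : ∀ j, θ j = q j - (⌊q j⌋₊ : ℝ))
    (hcard : m < S.card)
    (T : Finset R) (hTS : T ⊆ S) (hTcard : T.card = m)
    (hgreedy : ∀ i ∈ T, ∀ j ∈ S \ T, θ j ≤ θ i)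
    (xstar : R → ℕ) (hxstar : ∀ j, xstar j = x0 j + if j ∈ T then 1 else 0) :
    ((∀ j, xstar j ≤ c j) ∧ ∑ j, xstar j = n) ∧
    ∀ x : R → ℕ, (∀ j, x j ≤ c j) → ∑ j, x j = n →
      ∑ j, max 0 (q j - (xstar j : ℝ)) ≤ ∑ j, max 0 (q j - (x j : ℝ)) := by
  have hdpos : 0 < ∑ i, d i := by
    obtain ⟨j, hj⟩ := hd0
    exact Finset.sum_pos' (fun i _ => hd i) ⟨j, Finset.mem_univ j, lt_of_le_of_ne (hd j) (Ne.symm hj)⟩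
  have hq0 : ∀ j, 0 ≤ q j := fun j => by
    rw [hq]; exact div_nonneg (mul_nonneg (Nat.cast_nonneg n) (hd j)) hdpos.le
  have hqs : ∑ j, q j = n := by
    simp_rw [hq]
    rw [← Finset.sum_div, ← Finset.mul_sum]
    field_simp
  have hfl : ∀ j, (⌊q j⌋₊ : ℝ) ≤ q j := fun j => Nat.floor_le (hq0 j)
  have hfl1 : ∀ j, q j < (⌊q j⌋₊ : ℝ) + 1 := fun j => Nat.lt_floor_add_one (q j)
  have hx0n : ∑ j, x0 j ≤ n := by
    have h : (∑ j, (x0 j : ℝ)) ≤ n := by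
      rw [← hqs]
      refine Finset.sum_le_sum fun j _ => le_trans ?_ (hfl j)
      rw [hx0]
      exact_mod_cast min_le_left _ _
    exact_mod_cast h
  have hmS : ∀ j, j ∈ S ↔ ⌊q j⌋₊ < c j := fun j => by simp [hS]
  have hsum : ∑ j, xstar j = n := by
    simp_rw [hxstar]
    rw [Finset.sum_add_distrib]
    simp [hTcard]
    omega
  refine ⟨⟨fun j => ?_, hsum⟩, fun x hxc hxn => ?_⟩
  · rw [hxstar, hx0]
    split_ifs with h
    · have := (hmS j).1 (hTS h)
      omega
    · omega
  have hne : (S \ T).Nonempty := by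
    rw [← Finset.card_pos, Finset.card_sdiff_of_subset hTS]
    omega
  obtain ⟨k, hk, hkmax⟩ := Finset.exists_max_image (S \ T) θ hne
  have ht0 : 0 ≤ θ k := by rw [hθ]; linarith [hfl k]
  have ht1 : θ k ≤ 1 := by rw [hθ]; linarith [hfl1 k]
  have key : ∀ j, max 0 (q j - (xstar j : ℝ)) + θ k * xstar j
      ≤ max 0 (q j - (x j : ℝ)) + θ k * x j := by
    intro j
    have hb0 := le_max_left 0 (q j - (x j : ℝ))
    have hb1 := le_max_right 0 (q j - (x j : ℝ))
    have hj := hθ j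
    have hf := hfl j
    have hf1 := hfl1 j
    by_cases hjS : j ∈ S
    · have hlt := (hmS j).1 hjS
      have hx0j : x0 j = ⌊q j⌋₊ := by rw [hx0]; omega
      by_cases hjT : j ∈ T
      · have hs : (xstar j : ℝ) = ⌊q j⌋₊ + 1 := by rw [hxstar, hx0j]; simp [hjT]
        have hg := hgreedy j hjT k hk
        rw [hs, max_eq_left (by linarith)]
        rcases Nat.lt_or_ge ⌊q j⌋₊ (x j) with h | h
        · have h' : (⌊q j⌋₊ : ℝ) + 1 ≤ x j := by exact_mod_cast h
          nlinarith
        · have h' : (x j : ℝ) ≤ ⌊q j⌋₊ := by exact_mod_cast h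
          nlinarith [mul_nonneg (sub_nonneg.2 ht1) (sub_nonneg.2 h')]
      · have hs : (xstar j : ℝ) = ⌊q j⌋₊ := by rw [hxstar, hx0j]; simp [hjT]
        have hg := hkmax j (Finset.mem_sdiff.2 ⟨hjS, hjT⟩)
        rw [hs, max_eq_right (by linarith)]
        rcases Nat.lt_or_ge ⌊q j⌋₊ (x j) with h | h
        · have h' : (⌊q j⌋₊ : ℝ) + 1 ≤ x j := by exact_mod_cast h
          nlinarith
        · have h' : (x j : ℝ) ≤ ⌊q j⌋₊ := by exact_mod_cast h
          nlinarith [mul_nonneg (sub_nonneg.2 ht1) (sub_nonneg.2 h')]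
    · have hle : c j ≤ ⌊q j⌋₊ := not_lt.1 (fun h => hjS ((hmS j).2 h))
      have hjT : j ∉ T := fun h => hjS (hTS h)
      have hs : xstar j = c j := by rw [hxstar, hx0]; simp [hjT, hle]
      have hle' : (c j : ℝ) ≤ ⌊q j⌋₊ := by exact_mod_cast hle
      have h' : (x j : ℝ) ≤ c j := by exact_mod_cast hxc j
      rw [hs, max_eq_right (by linarith)]
      nlinarith [mul_nonneg (sub_nonneg.2 ht1) (sub_nonneg.2 h')]
  have hfin := Finset.sum_le_sum fun j (_ : j ∈ (Finset.univ : Finset R)) => key j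
  rw [Finset.sum_add_distrib, Finset.sum_add_distrib, ← Finset.mul_sum, ← Finset.mul_sum] at hfin
  have e1 : (∑ j, (xstar j : ℝ)) = n := by exact_mod_cast hsum
  have e2 : (∑ j, (x j : ℝ)) = n := by exact_mod_cast hxn
  rw [e1, e2] at hfin
  linarith
end

section
/- (Proposition 2, Case 2: value of MVA with abundant remaining supply.) Write x⁰_j = min(⌊q_j⌋, c_j), S = {j ∈ R : c_j > ⌊q_j⌋}, and m = n − ∑_{j∈R} x⁰_j (a nonnegative integer). Suppose |S| ≤ m. Then the minimum over vehicle allocations x of ∑_{j∈R} max(0, q_j − x_j) equals ∑_{j∈R} max(0, q_j − c_j); in particular, every zone j with q_j ≤ c_j incurs zero deficit at an optimum, and the only deficits come from zones whose waiting demand c_j falls below the proportional target q_j. -/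
open Finset

theorem exists_between_sum {R : Type*} [Fintype R] [DecidableEq R] (y c : R → ℕ)
    (hyc : ∀ j, y j ≤ c j) (n : ℕ) (h1 : ∑ j, y j ≤ n) :
    n ≤ ∑ j, c j → ∃ x : R → ℕ, (∀ j, y j ≤ x j) ∧ (∀ j, x j ≤ c j) ∧ ∑ j, x j = n := by
  induction n, h1 using Nat.le_induction with
  | base => exact fun _ => ⟨y, fun _ => le_rfl, hyc, rfl⟩
  | succ k hk ih =>
    intro h
    obtain ⟨x, hx1, hx2, hx3⟩ := ih (by omega)
    obtain ⟨i, -, hi⟩ : ∃ i ∈ Finset.univ, x i < c i :=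
      Finset.exists_lt_of_sum_lt (by omega)
    refine ⟨fun j => x j + if j = i then 1 else 0, fun j => (hx1 j).trans (by simp), ?_, ?_⟩
    · intro j
      have := hx2 j
      by_cases hj : j = i
      · subst hj; simp; omega
      · simp [hj, this]
    · simp [Finset.sum_add_distrib, hx3]

/-- **Proposition 2, Case 2** (value of the MVA problem with abundant
remaining supply): if the number of zones with residual demand after the floor
pre-assignment is at most the number `m` of leftover vehicles, then the
minimum of the reduced MVA objective `∑ j, max 0 (q j − x j)` over vehicle
allocations equals `∑ j, max 0 (q j − c j)`: the only deficits come from zones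
whose waiting demand `c j` falls below the proportional target `q j`. -/
theorem mva_case2_value (R : Type*) [Fintype R] [DecidableEq R] [Nonempty R]
    (n : ℕ) (hn : 1 ≤ n) (c : R → ℕ) (hc : n ≤ ∑ j, c j)
    (d : R → ℝ) (hd : ∀ j, 0 ≤ d j) (hd0 : ∃ j, d j ≠ 0)
    (q : R → ℝ) (hq : ∀ j, q j = (n : ℝ) * d j / ∑ i, d i)
    (x0 : R → ℕ) (hx0 : ∀ j, x0 j = min ⌊q j⌋₊ (c j))
    (S : Finset R) (hS : S = Finset.univ.filter fun j => ⌊q j⌋₊ < c j)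
    (m : ℕ) (hm : m = n - ∑ j, x0 j)
    (hcard : S.card ≤ m) :
    sInf {v : ℝ | ∃ x : R → ℕ,
        (∀ j, x j ≤ c j) ∧ (∑ j, x j = n) ∧
        v = ∑ j, max 0 (q j - (x j : ℝ))} =
      ∑ j, max 0 (q j - (c j : ℝ)) := by
  have hDpos : 0 < ∑ i, d i := by
    obtain ⟨j, hj⟩ := hd0
    exact Finset.sum_pos' (fun i _ => hd i) ⟨j, Finset.mem_univ j, lt_of_le_of_ne (hd j) hj.symm⟩
  have hq0 : ∀ j, 0 ≤ q j := fun j => by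
    rw [hq]; exact div_nonneg (mul_nonneg (Nat.cast_nonneg n) (hd j)) hDpos.le
  have hqs : ∑ j, q j = n := by
    simp_rw [hq]
    rw [← Finset.sum_div, ← Finset.mul_sum]
    field_simp
  have hx0n : ∑ j, x0 j ≤ n := by
    have : ((∑ j, x0 j : ℕ) : ℝ) ≤ n := by
      rw [← hqs]
      push_cast
      refine Finset.sum_le_sum fun j _ => ?_
      refine le_trans ?_ (Nat.floor_le (hq0 j))
      rw [hx0]
      exact_mod_cast min_le_left _ _
    exact_mod_cast this
  have hy : ∑ j, min (⌊q j⌋₊ + 1) (c j) ≤ n := by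
    have : ∑ j, min (⌊q j⌋₊ + 1) (c j) = ∑ j, x0 j + S.card := by
      rw [hS, Finset.card_filter, ← Finset.sum_add_distrib]
      refine Finset.sum_congr rfl fun j _ => ?_
      rw [hx0]
      split_ifs <;> omega
    omega
  obtain ⟨x, hx1, hx2, hx3⟩ := exists_between_sum _ c (fun j => min_le_right _ _) n hy hc
  apply IsLeast.csInf_eq
  constructor
  · refine ⟨x, hx2, hx3, Finset.sum_congr rfl fun j _ => ?_⟩
    rcases Nat.lt_or_ge (x j) (c j) with h | h
    · have h1 : ⌊q j⌋₊ + 1 ≤ x j := by have := hx1 j; omega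
      have h2 : ((⌊q j⌋₊ + 1 : ℕ) : ℝ) ≤ x j := by exact_mod_cast h1
      have h3 := Nat.lt_floor_add_one (q j)
      have h4 : (x j : ℝ) ≤ c j := by exact_mod_cast h.le
      push_cast at h2
      rw [max_eq_left (by linarith), max_eq_left (by linarith)]
    · rw [le_antisymm (hx2 j) h]
  · rintro v ⟨z, hz, -, rfl⟩
    refine Finset.sum_le_sum fun j _ => max_le_max le_rfl ?_
    have : (z j : ℝ) ≤ c j := by exact_mod_cast hz j
    linarith
end

section
/- (Optimality of the greedy relocation rounding.) Let m = l − ∑_{j∈R} ⌊p_j⌋ and S = {j ∈ R : p_j ∉ ℤ}. Then 0 ≤ m ≤ |S|, and for every T ⊆ S with |T| = m such that E_i ≥ E_j for all i ∈ T and j ∈ S∖T, the point z* defined by z*_j = ⌊p_j⌋ + 1 for j ∈ T and z*_j = ⌊p_j⌋ otherwise is feasible for the relocation rounding program and maximizes its objective: for every feasible z, ∑_{j∈R} E_j·(z_j − ⌊p_j⌋) ≤ ∑_{j∈R} E_j·(z*_j − ⌊p_j⌋). That is, the greedy algorithm (assigning the m surplus vehicles to the zones in S with largest weights E_j) globally solves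 the relocation integer program. -/
open Finset
open scoped Classical

/-- **Optimality of the greedy relocation rounding**: with proportional
fractional targets `p j = E j · l / ∑ i, E i`, the number `m = l − ∑ j, ⌊p j⌋`
of surplus vehicles satisfies `m ≤ |S|` where `S` is the set of zones with
non-integral target, and assigning the `m` surplus vehicles to the zones of
`S` with largest weights `E j` yields a feasible rounding maximizing
`∑ j, E j · (z j − ⌊p j⌋)` over all feasible roundings. -/
theorem relocation_greedy_optimal (R : Type*) [Fintype R] [Nonempty R]
    (E : R → ℝ) (hE : ∀ j, 0 ≤ E j) (hEpos : 0 < ∑ i, E i)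
    (l : ℕ)
    (p : R → ℝ) (hp : ∀ j, p j = E j * (l : ℝ) / ∑ i, E i)
    (m : ℕ) (hm : m = l - ∑ j, ⌊p j⌋₊)
    (S : Finset R) (hS : S = Finset.univ.filter fun j => p j ≠ (⌊p j⌋₊ : ℝ)) :
    m ≤ S.card ∧
    ∀ T ⊆ S, T.card = m →
      (∀ i ∈ T, ∀ j ∈ S \ T, E j ≤ E i) →
      ∀ zstar : R → ℕ, (∀ j, zstar j = ⌊p j⌋₊ + if j ∈ T then 1 else 0) →
        ((∀ j, ⌊p j⌋₊ ≤ zstar j ∧ zstar j ≤ ⌈p j⌉₊) ∧ ∑ j, zstar j = l) ∧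
        ∀ z : R → ℕ, (∀ j, ⌊p j⌋₊ ≤ z j ∧ z j ≤ ⌈p j⌉₊) → ∑ j, z j = l →
          ∑ j, E j * ((z j : ℝ) - (⌊p j⌋₊ : ℝ)) ≤
            ∑ j, E j * ((zstar j : ℝ) - (⌊p j⌋₊ : ℝ)) := by
  have hp0 : ∀ j, 0 ≤ p j := fun j => by
    rw [hp j]; exact div_nonneg (mul_nonneg (hE j) (Nat.cast_nonneg _)) hEpos.le
  have hps : ∑ j, p j = (l : ℝ) := by
    simp_rw [hp]
    rw [← Finset.sum_div, ← Finset.sum_mul]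
    field_simp
  have hmem : ∀ j, j ∈ S ↔ p j ≠ (⌊p j⌋₊ : ℝ) := fun j => by rw [hS]; simp
  have hceil : ∀ j, ⌈p j⌉₊ = ⌊p j⌋₊ + if j ∈ S then 1 else 0 := by
    intro j
    by_cases h : j ∈ S
    · rw [if_pos h]
      have h1 : (⌊p j⌋₊ : ℝ) < p j :=
        lt_of_le_of_ne (Nat.floor_le (hp0 j)) (Ne.symm ((hmem j).1 h))
      have h2 : ⌊p j⌋₊ < ⌈p j⌉₊ := Nat.lt_ceil.2 h1
      have h3 := Nat.ceil_le_floor_add_one (p j)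
      omega
    · rw [if_neg h]
      have h1 : p j = (⌊p j⌋₊ : ℝ) := by
        by_contra h2
        exact h ((hmem j).2 h2)
      have h2 : ⌈p j⌉₊ ≤ ⌊p j⌋₊ := Nat.ceil_le.2 h1.le
      have h3 := Nat.floor_le_ceil (p j)
      omega
  have hfl : ∑ j, ⌊p j⌋₊ ≤ l := by
    have : ((∑ j, ⌊p j⌋₊ : ℕ) : ℝ) ≤ l := by
      rw [← hps]; push_cast
      exact Finset.sum_le_sum fun j _ => Nat.floor_le (hp0 j)
    exact_mod_cast this
  have hcl : l ≤ ∑ j, ⌈p j⌉₊ := by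
    have : (l : ℝ) ≤ ((∑ j, ⌈p j⌉₊ : ℕ) : ℝ) := by
      rw [← hps]; push_cast
      exact Finset.sum_le_sum fun j _ => Nat.le_ceil (p j)
    exact_mod_cast this
  have hind : ∀ T : Finset R, ∑ j, (⌊p j⌋₊ + if j ∈ T then 1 else 0)
      = ∑ j, ⌊p j⌋₊ + T.card := by
    intro T
    rw [Finset.sum_add_distrib]
    simp
  refine ⟨?_, ?_⟩
  · have h := hind S
    simp_rw [hceil] at hcl
    omega
  intro T hTS hTm hT zstar hz
  have hzs : ∑ j, zstar j = l := by
    simp_rw [hz]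
    rw [hind T]
    omega
  refine ⟨⟨?_, hzs⟩, ?_⟩
  · intro j
    rw [hceil, hz]
    by_cases h : j ∈ T
    · have := hTS h
      simp [h, this]
    · simp [h]
  intro z hzf hzl
  obtain ⟨c, hc1, hc2⟩ : ∃ c : ℝ, (∀ i ∈ T, c ≤ E i) ∧ ∀ j ∈ S \ T, E j ≤ c := by
    by_cases hne : T.Nonempty
    · obtain ⟨i, hi, hmin⟩ := Finset.exists_min_image T E hne
      exact ⟨E i, hmin, hT i hi⟩
    · rw [Finset.not_nonempty_iff_eq_empty] at hne
      refine ⟨∑ i, E i, by simp [hne], fun j _ => ?_⟩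
      exact Finset.single_le_sum (fun i _ => hE i) (Finset.mem_univ j)
  have key : ∀ j, c * ((zstar j : ℝ) - z j) ≤ E j * ((zstar j : ℝ) - z j) := by
    intro j
    obtain ⟨h1, h2⟩ := hzf j
    rw [hceil] at h2
    have h3 := hz j
    by_cases h : j ∈ T
    · rw [if_pos (hTS h)] at h2
      rw [if_pos h] at h3
      have : (z j : ℝ) ≤ zstar j := by exact_mod_cast (by omega : z j ≤ zstar j)
      exact mul_le_mul_of_nonneg_right (hc1 j h) (by linarith)
    · rw [if_neg h] at h3
      by_cases hs : j ∈ S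
      · have : (zstar j : ℝ) ≤ z j := by exact_mod_cast (by omega : zstar j ≤ z j)
        exact mul_le_mul_of_nonpos_right (hc2 j (Finset.mem_sdiff.2 ⟨hs, h⟩)) (by linarith)
      · rw [if_neg hs] at h2
        have : zstar j = z j := by omega
        simp [this]
  have hsum := Finset.sum_le_sum fun j (_ : j ∈ Finset.univ) => key j
  have h0 : ∑ j, c * ((zstar j : ℝ) - z j) = 0 := by
    rw [← Finset.mul_sum, Finset.sum_sub_distrib]
    have e1 : ∑ j, (zstar j : ℝ) = l := by exact_mod_cast hzs
    have e2 : ∑ j, (z j : ℝ) = l := by exact_mod_cast hzl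
    rw [e1, e2]; simp
  rw [h0] at hsum
  rw [← sub_nonneg, ← Finset.sum_sub_distrib]
  refine hsum.trans (le_of_eq (Finset.sum_congr rfl fun j _ => ?_))
  ring
end

section
/- (Proposition 3, second part: integrality of the VOM linear-programming relaxation.) Suppose the VOM-LP feasible set Y is nonempty. Then for every cost function w : V × C → ℝ, the minimum of ∑_{(v,c)} w_{v,c}·y_{v,c} over y ∈ Y is attained, and it is attained at some y* ∈ Y with y*_{v,c} ∈ {0,1} for all (v,c) ∈ V × C. Consequently, the optimal solution of the binary vehicle-and-order matching problem VOM can be obtained by solving its linear-programming relaxation. -/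
open Finset

/-- The feasible set of the VOM linear-programming relaxation. -/
def VOMFeasible (V C R : Type*) [Fintype V] [Fintype C] [Fintype R]
    [DecidableEq R] (θ : C → R) (x : R → ℕ) (y : V → C → ℝ) : Prop :=
  (∀ v c, 0 ≤ y v c ∧ y v c ≤ 1) ∧
  (∀ c, ∑ v, y v c ≤ 1) ∧
  (∀ v, ∑ c, y v c = 1) ∧
  (∀ j, ∑ c ∈ Finset.univ.filter fun c => θ c = j, ∑ v, y v c = (x j : ℝ))

theorem vom_exists_integral_le {V C R : Type*} [Fintype V] [Fintype C]
    [Fintype R] [DecidableEq R] (θ : C → R) (x : R → ℕ) (w : V → C → ℝ)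
    (y : V → C → ℝ) (hy : VOMFeasible V C R θ x y) :
    ∃ z : V → C → ℝ, VOMFeasible V C R θ x z ∧ (∀ v c, z v c = 0 ∨ z v c = 1) ∧
      ∑ v, ∑ c, w v c * z v c ≤ ∑ v, ∑ c, w v c * y v c := by
  classical
  obtain ⟨hbox, hcol, hrow, hzone⟩ := hy
  let n : R → ℕ := fun j => (Finset.univ.filter fun c => θ c = j).card
  let s : C → ℝ := fun c => ∑ v, y v c
  have hns : ∀ j, ∑ c ∈ Finset.univ.filter (fun c => θ c = j), (1 - s c) = (n j : ℝ) - x j := by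
    intro j
    rw [Finset.sum_sub_distrib, hzone j]
    simp [n]
  have hxn : ∀ j, x j ≤ n j := by
    intro j
    have h : 0 ≤ ∑ c ∈ Finset.univ.filter (fun c => θ c = j), (1 - s c) :=
      Finset.sum_nonneg fun c _ => sub_nonneg.2 (hcol c)
    rw [hns] at h
    exact_mod_cast sub_nonneg.1 h
  have hxV : ∑ j, x j = Fintype.card V := by
    have h1 : ∑ j, (x j : ℝ) = ∑ c, s c := by
      rw [← Finset.sum_fiberwise Finset.univ θ s]
      exact Finset.sum_congr rfl fun j _ => (hzone j).symm
    have h2 : ∑ c, s c = Fintype.card V := by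
      simp only [s]
      rw [Finset.sum_comm, Finset.sum_congr rfl fun v _ => hrow v]
      simp
    exact_mod_cast h1.trans h2
  have hnC : ∑ j, n j = Fintype.card C := by
    simp only [n]
    rw [← Finset.card_eq_sum_card_fiberwise (fun _ _ => Finset.mem_coe.2 (Finset.mem_univ _))]
    rfl
  let D := Σ j : R, Fin (n j - x j)
  have hcard : Fintype.card (V ⊕ D) = Fintype.card C := by
    rw [Fintype.card_sum, Fintype.card_sigma, ← hxV, ← hnC]
    simp only [Fintype.card_fin]
    rw [← Finset.sum_add_distrib]
    exact Finset.sum_congr rfl fun j _ => by have := hxn j; omega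
  let e : V ⊕ D ≃ C := Fintype.equivOfCardEq hcard
  let Y : V ⊕ D → C → ℝ := fun r c => Sum.elim (fun v => y v c)
    (fun d => if θ c = d.1 then (1 - s c) / ((n d.1 : ℝ) - x d.1) else 0) r
  let M : Matrix C C ℝ := fun a c => Y (e.symm a) c
  have hM : M ∈ doublyStochastic ℝ C := by
    rw [mem_doublyStochastic_iff_sum]
    refine ⟨?_, ?_, ?_⟩
    · intro a c
      change 0 ≤ Y (e.symm a) c
      rcases e.symm a with v | d
      · exact (hbox v c).1
      · simp only [Y, Sum.elim_inr]
        split_ifs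
        · exact div_nonneg (sub_nonneg.2 (hcol c)) (sub_nonneg.2 (by exact_mod_cast hxn _))
        · exact le_rfl
    · intro a
      change ∑ c, Y (e.symm a) c = 1
      rcases e.symm a with v | d
      · exact hrow v
      · simp only [Y, Sum.elim_inr]
        rw [← Finset.sum_filter, ← Finset.sum_div, hns]
        apply div_self
        have h := d.2.pos
        have : (x d.1 : ℝ) < n d.1 := by exact_mod_cast (by omega : x d.1 < n d.1)
        linarith
    · intro c
      change ∑ a, Y (e.symm a) c = 1
      rw [Equiv.sum_comp e.symm (fun r => Y r c), Fintype.sum_sum_type, Fintype.sum_sigma]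
      simp only [Y, Sum.elim_inr, Sum.elim_inl, Finset.sum_const, Finset.card_univ,
        Fintype.card_fin, smul_ite, smul_zero, nsmul_eq_mul, Finset.sum_ite_eq, Finset.mem_univ,
        if_true]
      rw [Nat.cast_sub (hxn _)]
      change s c + _ = 1
      by_cases h0 : (n (θ c) : ℝ) - x (θ c) = 0
      · have h := hns (θ c)
        rw [h0, Finset.sum_eq_zero_iff_of_nonneg fun c _ => sub_nonneg.2 (hcol c)] at h
        have := h c (by simp)
        rw [h0]; linarith
      · rw [mul_div_cancel₀ _ h0]; ring
  obtain ⟨p, hp0, hp1, hpM⟩ := exists_eq_sum_perm_of_mem_doublyStochastic hM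
  let z : Equiv.Perm C → V → C → ℝ := fun σ v c => if σ (e (Sum.inl v)) = c then 1 else 0
  have hMent : ∀ a c, M a c = ∑ σ, p σ * (if σ a = c then 1 else 0) := by
    intro a c
    rw [← hpM, Matrix.sum_apply]
    refine Finset.sum_congr rfl fun σ _ => ?_
    simp [Matrix.smul_apply, Equiv.Perm.permMatrix, PEquiv.toMatrix_apply, Equiv.toPEquiv_apply, eq_comm]
  have hyz : ∀ v c, y v c = ∑ σ, p σ * z σ v c := by
    intro v c
    have := hMent (e (Sum.inl v)) c
    simpa [M, Y, z] using this
  have hcost : ∑ v, ∑ c, w v c * y v c = ∑ σ, p σ * ∑ v, ∑ c, w v c * z σ v c := by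
    simp only [hyz, Finset.mul_sum]
    rw [Finset.sum_comm' (t' := Finset.univ) (s' := fun _ => Finset.univ) (by simp)]
    rw [Finset.sum_comm, Finset.sum_comm (s := (Finset.univ : Finset (Equiv.Perm C)))]
    refine Finset.sum_congr rfl fun v _ => ?_
    rw [Finset.sum_comm]
    exact Finset.sum_congr rfl fun _ _ => Finset.sum_congr rfl fun _ _ => by ring
  obtain ⟨σ, hσ, hσc⟩ : ∃ σ, 0 < p σ ∧
      ∑ v, ∑ c, w v c * z σ v c ≤ ∑ v, ∑ c, w v c * y v c := by
    by_contra! hcon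
    obtain ⟨τ, -, hτ⟩ : ∃ τ ∈ (Finset.univ : Finset (Equiv.Perm C)), 0 < p τ := by
      apply Finset.exists_lt_of_sum_lt
      simp [hp1]
    have : ∑ σ, p σ * ∑ v, ∑ c, w v c * y v c < ∑ σ, p σ * ∑ v, ∑ c, w v c * z σ v c := by
      apply Finset.sum_lt_sum
      · intro σ _
        rcases (hp0 σ).eq_or_lt with h | h
        · simp [← h]
        · exact mul_le_mul_of_nonneg_left (hcon σ h).le h.le
      · exact ⟨τ, Finset.mem_univ _, mul_lt_mul_of_pos_left (hcon τ hτ) hτ⟩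
    rw [← Finset.sum_mul, hp1, one_mul, ← hcost] at this
    exact lt_irrefl _ this
  let f : V ⊕ D ≃ C := e.trans σ
  have hfz : ∀ v c, z σ v c = if f (Sum.inl v) = c then 1 else 0 := fun v c => rfl
  have hd : ∀ d : D, θ (f (Sum.inr d)) = d.1 := by
    intro d
    by_contra hne
    have h1 := hMent (e (Sum.inr d)) (f (Sum.inr d))
    have h2 : M (e (Sum.inr d)) (f (Sum.inr d)) = 0 := by
      simp [M, Y, hne]
    rw [h2] at h1
    have h3 := (Finset.sum_eq_zero_iff_of_nonneg (fun τ _ => mul_nonneg (hp0 τ)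
      (by split_ifs <;> norm_num))).1 h1.symm σ (Finset.mem_univ _)
    simp [f] at h3
    exact hσ.ne' h3
  refine ⟨z σ, ⟨?_, ?_, ?_, ?_⟩, ?_, hσc⟩
  · intro v c
    rw [hfz]; split_ifs <;> norm_num
  · intro c
    have h : ∑ r : V ⊕ D, (if f r = c then (1 : ℝ) else 0) = 1 := by
      rw [Equiv.sum_comp f (fun a => if a = c then (1 : ℝ) else 0)]
      simp
    rw [Fintype.sum_sum_type] at h
    have h2 : 0 ≤ ∑ d : D, (if f (Sum.inr d) = c then (1 : ℝ) else 0) :=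
      Finset.sum_nonneg fun d _ => by split_ifs <;> norm_num
    simp only [hfz]
    linarith
  · intro v
    simp [hfz]
  · intro j
    rw [Finset.sum_comm]
    have h : ∑ r : V ⊕ D, (if θ (f r) = j then (1 : ℝ) else 0) = n j := by
      rw [Equiv.sum_comp f (fun a => if θ a = j then (1 : ℝ) else 0)]
      simp [n]
    rw [Fintype.sum_sum_type] at h
    simp only [hd] at h
    have hD : ∑ d : D, (if d.1 = j then (1 : ℝ) else 0) = ((n j - x j : ℕ) : ℝ) := by
      rw [Fintype.sum_sigma]
      have h3 : ∀ i : R, ∑ _k : Fin (n i - x i), (if i = j then (1 : ℝ) else 0)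
          = if i = j then ((n i - x i : ℕ) : ℝ) else 0 := by
        intro i
        rw [Finset.sum_const, Finset.card_univ, Fintype.card_fin]
        split_ifs <;> simp
      rw [Finset.sum_congr rfl fun i _ => h3 i, Finset.sum_ite_eq']
      simp
    rw [hD] at h
    rw [Nat.cast_sub (hxn _)] at h
    have h2 : ∀ v, ∑ c ∈ Finset.univ.filter (fun c => θ c = j), z σ v c
        = if θ (f (Sum.inl v)) = j then (1 : ℝ) else 0 := by
      intro v
      simp [hfz, Finset.sum_ite_eq]
    rw [Finset.sum_congr rfl fun v _ => h2 v]
    linarith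
  · intro v c
    rw [hfz]; split_ifs <;> simp

/-- **Proposition 3, second part** (integrality of the VOM linear-programming
relaxation): if the feasible set is nonempty, then for every cost function the
minimum of the LP relaxation is attained at a binary point; hence the optimal
solution of the binary matching problem VOM can be obtained by solving its
linear-programming relaxation. -/
theorem vom_lp_integral_optimum (V C R : Type*) [Fintype V] [Fintype C]
    [Fintype R] [DecidableEq R] (θ : C → R) (x : R → ℕ)
    (hne : ∃ y : V → C → ℝ, VOMFeasible V C R θ x y) :
    ∀ w : V → C → ℝ, ∃ ystar : V → C → ℝ,
      VOMFeasible V C R θ x ystar ∧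
      (∀ v c, ystar v c = 0 ∨ ystar v c = 1) ∧
      ∀ y : V → C → ℝ, VOMFeasible V C R θ x y →
        ∑ v, ∑ c, w v c * ystar v c ≤ ∑ v, ∑ c, w v c * y v c := by
  classical
  intro w
  let S : Set (V → C → ℝ) := {z | VOMFeasible V C R θ x z ∧ ∀ v c, z v c = 0 ∨ z v c = 1}
  have hfin : S.Finite := by
    have hT : (Set.univ.pi fun _ : V => Set.univ.pi fun _ : C => ({0, 1} : Set ℝ)).Finite :=
      Set.Finite.pi fun _ => Set.Finite.pi fun _ => Set.toFinite _
    refine hT.subset ?_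
    intro z hz v _ c _
    exact hz.2 v c
  have hSne : S.Nonempty := by
    obtain ⟨y, hy⟩ := hne
    obtain ⟨z, hz, hz1, -⟩ := vom_exists_integral_le θ x w y hy
    exact ⟨z, hz, hz1⟩
  obtain ⟨z, hz, hmin⟩ := Set.exists_min_image S (fun z => ∑ v, ∑ c, w v c * z v c) hfin hSne
  refine ⟨z, hz.1, hz.2, fun y hy => ?_⟩
  obtain ⟨z', hz', hz1', hle⟩ := vom_exists_integral_le θ x w y hy
  exact (hmin z' ⟨hz', hz1'⟩).trans hle
end
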